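/- arXiv:2010.06236 — 2 statements merged into one kernel-verified Lean document; each statement's English description precedes it below -/
import Mathlib

section
/- Let L^(0) ∈ ℝ^{m×n} be an admissible gain and define recursively: P^(τ) is the solution of the stochastic Lyapunov equation for L^(τ), and L^(τ+1) = −(R + Bᵀ P^(τ) B + Σ_{j=1}^q β̄_j B_jᵀ P^(τ) B_j)^{-1} Bᵀ P^(τ) A. Then every L^(τ) is admissible, the sequence (P^(τ)) is nonincreasing in the Loewner order and bounded below by 0, P^(τ) converges as τ → ∞ to a symmetric positive semidefinite matrix P* that solves the stochastic algebraic Riccati equation, and L^(τ) converges to L* = −(R + Bᵀ P* B + Σ_{j=1}^q β̄_j B_jᵀ P* B_j)^{-1} Bᵀ P* A. -/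
open Matrix Filter Topology

/-- The sandwich map `X ↦ M * X * Mᵀ` as a linear endomorphism of `n × n` real matrices. -/
noncomputable def sandwich {n : ℕ} (M : Matrix (Fin n) (Fin n) ℝ) :
    Module.End ℝ (Matrix (Fin n) (Fin n) ℝ) :=
  (LinearMap.mulLeft ℝ M).comp (LinearMap.mulRight ℝ Mᵀ)

/-- The closed-loop covariance operator
`𝒯_L(X) = (A+BL) X (A+BL)ᵀ + Σᵢ ᾱᵢ Aᵢ X Aᵢᵀ + Σⱼ β̄ⱼ (BⱼL) X (BⱼL)ᵀ`. -/
noncomputable def calT {n m p q : ℕ}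
    (A : Matrix (Fin n) (Fin n) ℝ) (A' : Fin p → Matrix (Fin n) (Fin n) ℝ)
    (B : Matrix (Fin n) (Fin m) ℝ) (B' : Fin q → Matrix (Fin n) (Fin m) ℝ)
    (al : Fin p → ℝ) (be : Fin q → ℝ) (L : Matrix (Fin m) (Fin n) ℝ) :
    Module.End ℝ (Matrix (Fin n) (Fin n) ℝ) :=
  sandwich (A + B * L) + ∑ i, al i • sandwich (A' i) + ∑ j, be j • sandwich (B' j * L)

/-- The (trace-)adjoint operator
`𝒯_L^*(P) = (A+BL)ᵀ P (A+BL) + Σᵢ ᾱᵢ Aᵢᵀ P Aᵢ + Σⱼ β̄ⱼ Lᵀ Bⱼᵀ P Bⱼ L`. -/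
noncomputable def calTstar {n m p q : ℕ}
    (A : Matrix (Fin n) (Fin n) ℝ) (A' : Fin p → Matrix (Fin n) (Fin n) ℝ)
    (B : Matrix (Fin n) (Fin m) ℝ) (B' : Fin q → Matrix (Fin n) (Fin m) ℝ)
    (al : Fin p → ℝ) (be : Fin q → ℝ) (L : Matrix (Fin m) (Fin n) ℝ) :
    Module.End ℝ (Matrix (Fin n) (Fin n) ℝ) :=
  sandwich (A + B * L)ᵀ + ∑ i, al i • sandwich (A' i)ᵀ + ∑ j, be j • sandwich (B' j * L)ᵀ

/-- A gain `L` is admissible if the spectral radius of `𝒯_L`, as a linear endomorphism of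
the space of `n × n` real matrices, is strictly less than `1`. -/
noncomputable def Admissible {n m p q : ℕ}
    (A : Matrix (Fin n) (Fin n) ℝ) (A' : Fin p → Matrix (Fin n) (Fin n) ℝ)
    (B : Matrix (Fin n) (Fin m) ℝ) (B' : Fin q → Matrix (Fin n) (Fin m) ℝ)
    (al : Fin p → ℝ) (be : Fin q → ℝ) (L : Matrix (Fin m) (Fin n) ℝ) : Prop :=
  spectralRadius ℝ (calT A A' B B' al be L) < 1

/-! ### Quadratic forms -/

lemma psd_iff {n : ℕ} {X : Matrix (Fin n) (Fin n) ℝ} :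
    X.PosSemidef ↔ Xᵀ = X ∧ ∀ v, 0 ≤ v ⬝ᵥ X *ᵥ v := by
  rw [posSemidef_iff_dotProduct_mulVec]
  simp [Matrix.IsHermitian]

lemma pd_iff {n : ℕ} {X : Matrix (Fin n) (Fin n) ℝ} :
    X.PosDef ↔ Xᵀ = X ∧ ∀ v, v ≠ 0 → 0 < v ⬝ᵥ X *ᵥ v := by
  rw [posDef_iff_dotProduct_mulVec]
  simp [Matrix.IsHermitian]

lemma dot_self_nonneg {n : ℕ} (v : Fin n → ℝ) : 0 ≤ v ⬝ᵥ v :=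
  Finset.sum_nonneg fun i _ => mul_self_nonneg (v i)

lemma dot_self_pos {n : ℕ} {v : Fin n → ℝ} (hv : v ≠ 0) : 0 < v ⬝ᵥ v :=
  lt_of_le_of_ne (dot_self_nonneg v) fun h => hv (dotProduct_self_eq_zero.1 h.symm)

lemma sq_le_dot {n : ℕ} (v : Fin n → ℝ) (i : Fin n) : v i * v i ≤ v ⬝ᵥ v :=
  Finset.single_le_sum (f := fun i => v i * v i) (fun i _ => mul_self_nonneg (v i))
    (Finset.mem_univ i)

lemma bilin_bound {n : ℕ} (X : Matrix (Fin n) (Fin n) ℝ) (u v : Fin n → ℝ) :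
    2 * (u ⬝ᵥ X *ᵥ v) ≤ (∑ i, ∑ j, |X i j|) * (u ⬝ᵥ u + v ⬝ᵥ v) := by
  have h : u ⬝ᵥ X *ᵥ v = ∑ i, ∑ j, u i * (X i j * v j) := by
    simp only [dotProduct, mulVec, Finset.mul_sum]
  rw [h, Finset.mul_sum, Finset.sum_mul]
  refine Finset.sum_le_sum fun i _ => ?_
  rw [Finset.mul_sum, Finset.sum_mul]
  refine Finset.sum_le_sum fun j _ => ?_
  have h1 := sq_le_dot u i
  have h2 := sq_le_dot v j
  have h3 : |X i j| * (u i * u i + v j * v j) ≤ |X i j| * (u ⬝ᵥ u + v ⬝ᵥ v) :=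
    mul_le_mul_of_nonneg_left (by linarith) (abs_nonneg _)
  refine le_trans ?_ h3
  have h4 : X i j * (2 * (u i * v j)) ≤ |X i j| * |2 * (u i * v j)| := by
    rw [← abs_mul]; exact le_abs_self _
  have h5 : |2 * (u i * v j)| ≤ u i * u i + v j * v j := by
    rw [abs_le]; constructor <;> nlinarith [sq_nonneg (u i + v j), sq_nonneg (u i - v j)]
  nlinarith [mul_le_mul_of_nonneg_left h5 (abs_nonneg (X i j))]

lemma quad_bound {n : ℕ} (X : Matrix (Fin n) (Fin n) ℝ) (v : Fin n → ℝ) :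
    v ⬝ᵥ X *ᵥ v ≤ (∑ i, ∑ j, |X i j|) * (v ⬝ᵥ v) := by
  have := bilin_bound X v v
  nlinarith

lemma pd_lower {n : ℕ} {G : Matrix (Fin n) (Fin n) ℝ} (hG : G.PosDef) :
    ∃ c > 0, ∀ v, c * (v ⬝ᵥ v) ≤ v ⬝ᵥ G *ᵥ v := by
  obtain ⟨-, hpos⟩ := pd_iff.1 hG
  have hcont : Continuous fun v : Fin n → ℝ => v ⬝ᵥ G *ᵥ v := by fun_prop
  have hcont' : Continuous fun v : Fin n → ℝ => v ⬝ᵥ v := by fun_prop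
  have hcomp : IsCompact {v : Fin n → ℝ | v ⬝ᵥ v = 1} := by
    refine Metric.isCompact_of_isClosed_isBounded (isClosed_eq hcont' continuous_const) ?_
    refine (Metric.isBounded_closedBall (x := (0 : Fin n → ℝ)) (r := 1)).subset fun v hv => ?_
    rw [mem_closedBall_zero_iff, pi_norm_le_iff_of_nonneg zero_le_one]
    intro i
    have h1 := sq_le_dot v i
    rw [show v ⬝ᵥ v = 1 from hv] at h1
    rw [Real.norm_eq_abs, abs_le]
    constructor <;> nlinarith
  have scale : ∀ c : ℝ, (∀ v : Fin n → ℝ, v ⬝ᵥ v = 1 → c ≤ v ⬝ᵥ G *ᵥ v) →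
      ∀ v : Fin n → ℝ, c * (v ⬝ᵥ v) ≤ v ⬝ᵥ G *ᵥ v := by
    intro c hc v
    by_cases hv : v = 0
    · subst hv; simp
    have hp := dot_self_pos hv
    have hs : √(v ⬝ᵥ v) * √(v ⬝ᵥ v) = v ⬝ᵥ v := Real.mul_self_sqrt hp.le
    have hs0 : 0 < √(v ⬝ᵥ v) := Real.sqrt_pos.2 hp
    have h := hc ((√(v ⬝ᵥ v))⁻¹ • v) (by
      simp only [smul_dotProduct, dotProduct_smul, smul_eq_mul]
      rw [← mul_assoc, ← mul_inv, hs, inv_mul_cancel₀ hp.ne'])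
    simp only [smul_dotProduct, dotProduct_smul, mulVec_smul, smul_eq_mul] at h
    rw [← mul_assoc, ← mul_inv, hs, inv_mul_eq_div, le_div_iff₀ hp] at h
    exact h
  by_cases hne : {v : Fin n → ℝ | v ⬝ᵥ v = 1}.Nonempty
  · obtain ⟨v₀, hv₀, hmin⟩ := hcomp.exists_isMinOn hne hcont.continuousOn
    refine ⟨v₀ ⬝ᵥ G *ᵥ v₀, hpos v₀ ?_, scale _ fun v hv => hmin hv⟩
    rintro rfl
    simp at hv₀
  · refine ⟨1, one_pos, scale _ fun v hv => (hne ⟨v, hv⟩).elim⟩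

/-- A positive definite matrix dominates every symmetric matrix up to a constant. -/
lemma pd_dominates {n : ℕ} {G K : Matrix (Fin n) (Fin n) ℝ} (hG : G.PosDef) (hK : Kᵀ = K) :
    ∃ C₀ : ℝ, ∀ C ≥ C₀, (C • G - K).PosSemidef := by
  obtain ⟨c, hc, h⟩ := pd_lower hG
  refine ⟨(∑ i, ∑ j, |K i j|) / c, fun C hC => psd_iff.2 ⟨?_, fun v => ?_⟩⟩
  · rw [transpose_sub, transpose_smul, (pd_iff.1 hG).1, hK]
  · have h1 := quad_bound K v
    have h2 := h v
    have h0 : 0 ≤ ∑ i, ∑ j, |K i j| :=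
      Finset.sum_nonneg fun i _ => Finset.sum_nonneg fun j _ => abs_nonneg _
    rw [ge_iff_le, div_le_iff₀ hc] at hC
    have hC0 : 0 ≤ C := by by_contra hneg; nlinarith
    rw [sub_mulVec, smul_mulVec, dotProduct_sub, dotProduct_smul, smul_eq_mul, sub_nonneg]
    have h3 := mul_le_mul_of_nonneg_left h2 hC0
    have h4 := mul_le_mul_of_nonneg_right hC (dot_self_nonneg v)
    nlinarith

lemma psd_closed {n : ℕ} : IsClosed {X : Matrix (Fin n) (Fin n) ℝ | X.PosSemidef} := by
  simp only [psd_iff, Set.ofPred_and, Set.ofPred_forall]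
  refine (isClosed_eq (by fun_prop) continuous_id).inter (isClosed_iInter fun v => ?_)
  exact isClosed_le continuous_const (by fun_prop)

/-- Symmetric matrices close to a positive definite one are positive semidefinite. -/
lemma pd_nhds {n : ℕ} {G : Matrix (Fin n) (Fin n) ℝ} (hG : G.PosDef) :
    ∀ᶠ X in 𝓝 G, Xᵀ = X → X.PosSemidef := by
  obtain ⟨c, hc, h⟩ := pd_lower hG
  have hcont : Continuous fun X : Matrix (Fin n) (Fin n) ℝ => ∑ i, ∑ j, |(G - X) i j| := by
    refine continuous_finsetSum _ fun i _ => continuous_finsetSum _ fun j _ => ?_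
    exact ((continuous_const.sub continuous_id).matrix_elem i j).abs
  have hev := hcont.continuousAt.eventually_lt (x₀ := G) (continuousAt_const (y := c))
    (by simpa using hc)
  filter_upwards [hev] with X hX hsym
  refine psd_iff.2 ⟨hsym, fun v => ?_⟩
  have h1 := quad_bound (G - X) v
  have h2 := h v
  rw [sub_mulVec, dotProduct_sub] at h1
  have h3 := mul_le_mul_of_nonneg_right hX.le (dot_self_nonneg v)
  linarith

/-! ### Resolvent path -/

lemma resolvent_path {V : Type*} [NormedAddCommGroup V] [NormedSpace ℝ V]
    [FiniteDimensional ℝ V] (F : Module.End ℝ V)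
    (h : ∀ s ∈ Set.Icc (0 : ℝ) 1, IsUnit (1 - s • F)) (W : V) :
    ∃ P : ℝ → V, ContinuousOn P (Set.Icc 0 1) ∧
      ∀ s ∈ Set.Icc (0 : ℝ) 1, P s = s • F (P s) + W := by
  have : CompleteSpace V := FiniteDimensional.complete ℝ V
  let e := Module.End.toContinuousLinearMap (𝕜 := ℝ) V
  have hu : ∀ s ∈ Set.Icc (0 : ℝ) 1, IsUnit (1 - s • e F) := by
    intro s hs
    have := (h s hs).map e
    simpa using this
  refine ⟨fun s => Ring.inverse (1 - s • e F) W, ?_, ?_⟩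
  · intro s hs
    obtain ⟨u, hu⟩ := hu s hs
    have h1 : ContinuousAt (fun s : ℝ => Ring.inverse (1 - s • e F)) s := by
      have h2 := NormedRing.inverse_continuousAt u
      rw [hu] at h2
      exact ContinuousAt.comp (f := fun s : ℝ => 1 - s • e F) h2 (by fun_prop)
    exact (h1.clm_apply continuousAt_const).continuousWithinAt
  · intro s hs
    have h1 := Ring.mul_inverse_cancel _ (hu s hs)
    have h2 := congrArg (fun f : V →L[ℝ] V => f W) h1
    simp only [mul_apply_eq_comp, _root_.sub_apply,
      one_apply_eq_self, _root_.smul_apply] at h2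
    have h3 : ∀ x, e F x = F x := fun x => rfl
    rw [h3] at h2
    exact (sub_eq_iff_eq_add'.1 h2)

/-! ### Completely positive operators -/

/-- `X` is dominated by `P` as a bilinear form. -/
def Dom {n : ℕ} (X P : Matrix (Fin n) (Fin n) ℝ) : Prop :=
  ∀ u v : Fin n → ℝ, 2 * (u ⬝ᵥ X *ᵥ v) ≤ u ⬝ᵥ P *ᵥ u + v ⬝ᵥ P *ᵥ v

/-- The consequences of complete positivity used below. -/
structure IsCP {n : ℕ} (F : Module.End ℝ (Matrix (Fin n) (Fin n) ℝ)) : Prop where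
  tr : ∀ X, F Xᵀ = (F X)ᵀ
  dom : ∀ X P, Dom X P → Dom (F X) (F P)

lemma Dom.add {n : ℕ} {X P X' P' : Matrix (Fin n) (Fin n) ℝ} (h : Dom X P) (h' : Dom X' P') :
    Dom (X + X') (P + P') := by
  intro u v
  have h1 := h u v
  have h2 := h' u v
  simp only [add_mulVec, dotProduct_add]
  linarith

lemma Dom.smul {n : ℕ} {X P : Matrix (Fin n) (Fin n) ℝ} (h : Dom X P) {c : ℝ} (hc : 0 ≤ c) :
    Dom (c • X) (c • P) := by
  intro u v
  have h1 := mul_le_mul_of_nonneg_left (h u v) hc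
  simp only [smul_mulVec, dotProduct_smul, smul_eq_mul]
  linarith

lemma dom_zero {n : ℕ} {P : Matrix (Fin n) (Fin n) ℝ} (h : P.PosSemidef) : Dom 0 P := by
  intro u v
  have h1 := (psd_iff.1 h).2 u
  have h2 := (psd_iff.1 h).2 v
  simp only [zero_mulVec, dotProduct_zero]
  linarith

lemma Dom.mono {n : ℕ} {X P P' : Matrix (Fin n) (Fin n) ℝ} (h : Dom X P)
    (h' : (P' - P).PosSemidef) : Dom X P' := by
  simpa using h.add (dom_zero h')

lemma IsCP.psd {n : ℕ} {F : Module.End ℝ (Matrix (Fin n) (Fin n) ℝ)} (hF : IsCP F)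
    {P : Matrix (Fin n) (Fin n) ℝ} (h : P.PosSemidef) : (F P).PosSemidef := by
  refine psd_iff.2 ⟨by rw [← hF.tr, (psd_iff.1 h).1], fun v => ?_⟩
  have := hF.dom 0 P (dom_zero h) v v
  simp only [map_zero, zero_mulVec, dotProduct_zero] at this
  linarith

lemma sandwich_apply {n : ℕ} (M X : Matrix (Fin n) (Fin n) ℝ) :
    sandwich M X = M * X * Mᵀ := by
  simp [sandwich, Matrix.mul_assoc]

lemma isCP_sandwich {n : ℕ} (M : Matrix (Fin n) (Fin n) ℝ) : IsCP (sandwich M) := by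
  constructor
  · intro X
    simp [sandwich_apply, Matrix.mul_assoc]
  · intro X P h u v
    have key : ∀ (Z : Matrix (Fin n) (Fin n) ℝ) (a b : Fin n → ℝ),
        a ⬝ᵥ (M * Z * Mᵀ) *ᵥ b = (Mᵀ *ᵥ a) ⬝ᵥ Z *ᵥ (Mᵀ *ᵥ b) := by
      intro Z a b
      rw [← mulVec_mulVec, ← mulVec_mulVec, dotProduct_mulVec, ← mulVec_transpose]
    simp only [sandwich_apply, key]
    exact h _ _

lemma IsCP.add {n : ℕ} {F F' : Module.End ℝ (Matrix (Fin n) (Fin n) ℝ)} (h : IsCP F)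
    (h' : IsCP F') : IsCP (F + F') := by
  constructor
  · intro X
    simp [h.tr, h'.tr]
  · intro X P hXP
    exact (h.dom X P hXP).add (h'.dom X P hXP)

lemma IsCP.smul {n : ℕ} {F : Module.End ℝ (Matrix (Fin n) (Fin n) ℝ)} (h : IsCP F)
    {c : ℝ} (hc : 0 ≤ c) : IsCP (c • F) := by
  constructor
  · intro X
    simp [h.tr]
  · intro X P hXP
    exact (h.dom X P hXP).smul hc

lemma isCP_zero {n : ℕ} : IsCP (0 : Module.End ℝ (Matrix (Fin n) (Fin n) ℝ)) := by
  constructor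
  · intro X
    simp
  · intro X P _ u v
    simp

lemma isCP_sum {n : ℕ} {ι : Type*} (s : Finset ι)
    (F : ι → Module.End ℝ (Matrix (Fin n) (Fin n) ℝ)) (h : ∀ i, IsCP (F i)) :
    IsCP (∑ i ∈ s, F i) := by
  classical
  induction s using Finset.induction_on with
  | empty => simpa using isCP_zero
  | insert a s ha ih => rw [Finset.sum_insert ha]; exact (h a).add ih

/-- Positive solvability of the Lyapunov equation, positive definite right-hand side. -/
lemma lyap_pd {n : ℕ} {F : Module.End ℝ (Matrix (Fin n) (Fin n) ℝ)} (hF : IsCP F)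
    (h : ∀ s ∈ Set.Icc (0 : ℝ) 1, IsUnit (1 - s • F)) {W : Matrix (Fin n) (Fin n) ℝ}
    (hW : W.PosDef) : ∃ P, P.PosSemidef ∧ P = F P + W := by
  have hpath : ∃ P : ℝ → Matrix (Fin n) (Fin n) ℝ, ContinuousOn P (Set.Icc 0 1) ∧
      ∀ s ∈ Set.Icc (0 : ℝ) 1, P s = s • F (P s) + W := by
    let _ : NormedAddCommGroup (Matrix (Fin n) (Fin n) ℝ) := Matrix.normedAddCommGroup
    let _ : NormedSpace ℝ (Matrix (Fin n) (Fin n) ℝ) := Matrix.normedSpace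
    exact resolvent_path F h W
  obtain ⟨P, hPc, hP⟩ := hpath
  have hWs := (pd_iff.1 hW).1
  have hsym : ∀ s ∈ Set.Icc (0 : ℝ) 1, (P s)ᵀ = P s := by
    intro s hs
    have hinj : Function.Injective ⇑(1 - s • F : Module.End ℝ (Matrix (Fin n) (Fin n) ℝ)) :=
      ((Module.End.isUnit_iff _).1 (h s hs)).1
    apply hinj
    have h1 : (1 - s • F) (P s) = W := by
      simpa [sub_eq_iff_eq_add'] using hP s hs
    have h2 : (1 - s • F) (P s)ᵀ = ((1 - s • F) (P s))ᵀ := by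
      simp [hF.tr]
    rw [h2, h1, hWs]
  have hsub : Set.Icc (0 : ℝ) 1 ⊆ {s | s ∈ Set.Icc (0 : ℝ) 1 ∧ (P s).PosSemidef} ∪ Set.Ioi 1 := by
    refine IsClosed.Icc_subset_of_forall_mem_nhdsWithin ?_ ?_ ?_
    · have h1 := hPc.preimage_isClosed_of_isClosed isClosed_Icc (psd_closed (n := n))
      convert h1 using 1
      ext s
      simp only [Set.mem_inter_iff, Set.mem_union, Set.mem_ofPred_eq, Set.mem_preimage,
        Set.mem_Icc, Set.mem_Ioi]
      constructor
      · rintro ⟨h1 | h1, h2⟩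
        · exact h1
        · linarith [h2.2]
      · rintro h1
        exact ⟨Or.inl h1, h1.1⟩
    · left
      have h0 : (0 : ℝ) ∈ Set.Icc (0 : ℝ) 1 := by simp
      refine ⟨h0, ?_⟩
      have := hP 0 h0
      rw [zero_smul, zero_add] at this
      rw [this]
      exact hW.posSemidef
    · rintro s ⟨hs1, hs2⟩
      have hs : s ∈ Set.Icc (0 : ℝ) 1 := ⟨hs2.1, hs2.2.le⟩
      have hpsd : (P s).PosSemidef := by
        rcases hs1 with h1 | h1
        · exact h1.2
        · exact absurd hs2.2 (not_lt.2 (le_of_lt h1))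
      have hpd : (P s).PosDef := by
        rw [hP s hs, add_comm]
        exact hW.add_posSemidef ((hF.smul hs.1).psd hpsd)
      have hev := (hPc s hs).eventually (pd_nhds hpd)
      have hmem : Set.Ioo s 1 ∈ 𝓝[>] s := Ioo_mem_nhdsGT hs2.2
      have hle : 𝓝[>] s ≤ 𝓝[Set.Icc 0 1] s := by
        rw [← nhdsWithin_Ioo_eq_nhdsGT hs2.2]
        exact nhdsWithin_mono _ fun x hx => ⟨hs.1.trans hx.1.le, hx.2.le⟩
      filter_upwards [hle hev, hmem] with x hx hx'
      have hxI : x ∈ Set.Icc (0 : ℝ) 1 := ⟨hs.1.trans hx'.1.le, hx'.2.le⟩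
      exact Or.inl ⟨hxI, hx (hsym x hxI)⟩
  have h1 : (1 : ℝ) ∈ Set.Icc (0 : ℝ) 1 := by simp
  refine ⟨P 1, ?_, by simpa using hP 1 h1⟩
  rcases hsub h1 with h2 | h2
  · exact h2.2
  · exact absurd (Set.mem_Ioi.1 h2) (lt_irrefl _)

/-- Any solution of the Lyapunov equation with semidefinite right-hand side is semidefinite. -/
lemma lyap_psd {n : ℕ} {F : Module.End ℝ (Matrix (Fin n) (Fin n) ℝ)} (hF : IsCP F)
    (h : ∀ s ∈ Set.Icc (0 : ℝ) 1, IsUnit (1 - s • F)) {W P : Matrix (Fin n) (Fin n) ℝ}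
    (hW : W.PosSemidef) (hP : P = F P + W) : P.PosSemidef := by
  obtain ⟨Y, hY, hYeq⟩ := lyap_pd hF h (W := 1) Matrix.PosDef.one
  have hinj : Function.Injective ⇑(1 - F : Module.End ℝ (Matrix (Fin n) (Fin n) ℝ)) := by
    have := ((Module.End.isUnit_iff _).1 (h 1 (by simp))).1
    simpa using this
  have hε : ∀ ε : ℝ, 0 < ε → (P + ε • Y).PosSemidef := by
    intro ε hε
    obtain ⟨Z, hZ, hZeq⟩ := lyap_pd hF h (W := W + ε • (1 : Matrix (Fin n) (Fin n) ℝ))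
      (by rw [add_comm]; exact (Matrix.PosDef.one.smul hε).add_posSemidef hW)
    have : Z = P + ε • Y := by
      apply hinj
      have e1 : (1 - F) Z = W + ε • (1 : Matrix (Fin n) (Fin n) ℝ) := by
        simpa [sub_eq_iff_eq_add'] using hZeq
      have e2 : (1 - F) P = W := by
        simpa [sub_eq_iff_eq_add'] using hP
      have e3 : (1 - F) Y = 1 := by
        simpa [sub_eq_iff_eq_add'] using hYeq
      rw [map_add, map_smul, e1, e2, e3]
    rw [← this]; exact hZ
  have hlim : Tendsto (fun ε : ℝ => P + ε • Y) (𝓝[>] 0) (𝓝 P) := by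
    have : Continuous fun ε : ℝ => P + ε • Y := by fun_prop
    have h2 := this.tendsto 0
    simp only [zero_smul, add_zero] at h2
    exact h2.mono_left nhdsWithin_le_nhds
  exact psd_closed.mem_of_tendsto hlim (by
    filter_upwards [self_mem_nhdsWithin] with ε he using hε ε he)

/-- A strict Lyapunov certificate bounds the real eigenvalues. -/
lemma spectrum_of_cert {n : ℕ} {F : Module.End ℝ (Matrix (Fin n) (Fin n) ℝ)} (hF : IsCP F)
    {Z : Matrix (Fin n) (Fin n) ℝ} (hZ : Z.PosDef) (hZF : (Z - F Z).PosDef)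
    {μ : ℝ} (hμ : μ ∈ spectrum ℝ F) : |μ| < 1 := by
  obtain ⟨X, hX, hX0⟩ := (Module.End.HasEigenvalue.of_mem_spectrum hμ).exists_hasEigenvector
  have hFX : F X = μ • X := Module.End.mem_eigenspace_iff.1 hX
  obtain ⟨C₀, hC₀⟩ := pd_dominates hZF (pd_iff.1 hZ).1
  set C := max C₀ 1 with hC
  have hC1 : 1 ≤ C := le_max_right _ _
  have hCp := hC₀ C (le_max_left _ _)
  set r := 1 - C⁻¹ with hr
  have hCpos : 0 < C := by linarith
  have hr0 : 0 ≤ r := by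
    have := inv_le_one_of_one_le₀ hC1
    linarith
  have hr1 : r < 1 := by
    have : 0 < C⁻¹ := inv_pos.2 hCpos
    linarith
  have hrZ : (r • Z - F Z).PosSemidef := by
    have h1 := hCp.smul (inv_pos.2 hCpos).le
    convert h1 using 1
    rw [smul_sub, smul_smul, inv_mul_cancel₀ hCpos.ne', hr, sub_smul, one_smul, one_smul]
    abel
  by_contra hcon
  rw [not_lt] at hcon
  -- initial domination
  obtain ⟨c, hc, hlow⟩ := pd_lower hZ
  set S := ∑ i, ∑ j, |X i j| with hS
  have hS0 : 0 ≤ S := Finset.sum_nonneg fun i _ => Finset.sum_nonneg fun j _ => abs_nonneg _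
  have hdom0 : Dom X ((S / c) • Z) := by
    intro u v
    have h1 := bilin_bound X u v
    have h2 : ∀ w : Fin n → ℝ, S * (w ⬝ᵥ w) ≤ S / c * (w ⬝ᵥ Z *ᵥ w) := by
      intro w
      have := mul_le_mul_of_nonneg_left (hlow w) (div_nonneg hS0 hc.le)
      rwa [← mul_assoc, div_mul_cancel₀ _ hc.ne'] at this
    simp only [smul_mulVec, dotProduct_smul, smul_eq_mul]
    linarith [h2 u, h2 v]
  have hSc : 0 ≤ S / c := div_nonneg hS0 hc.le
  have hdom : ∀ k : ℕ, Dom (μ ^ k • X) ((r ^ k * (S / c)) • Z) := by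
    intro k
    induction k with
    | zero => simpa using hdom0
    | succ k ih =>
      have h1 := hF.dom _ _ ih
      rw [map_smul, map_smul, hFX, smul_smul, ← pow_succ] at h1
      refine h1.mono ?_
      have h2 := hrZ.smul (mul_nonneg (pow_nonneg hr0 k) hSc)
      convert h2 using 1
      rw [smul_sub, smul_smul]
      congr 2
      ring
  apply hX0
  have hzero : ∀ u v : Fin n → ℝ, u ⬝ᵥ X *ᵥ v = 0 := by
    intro u v
    set t := |u ⬝ᵥ X *ᵥ v| with ht
    set a := S / c * (u ⬝ᵥ Z *ᵥ u + v ⬝ᵥ Z *ᵥ v) with ha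
    have hk : ∀ k : ℕ, 2 * t ≤ r ^ k * a := by
      intro k
      have h1 := hdom k u v
      have h2 := hdom k (-u) v
      simp only [smul_mulVec, dotProduct_smul, smul_eq_mul, neg_dotProduct, mulVec_neg,
        dotProduct_neg] at h1 h2
      have h3 : |μ ^ k * (u ⬝ᵥ X *ᵥ v)| * 2 ≤ r ^ k * a := by
        rcases abs_cases (μ ^ k * (u ⬝ᵥ X *ᵥ v)) with ⟨h, -⟩ | ⟨h, -⟩ <;> rw [h, ha] <;> linarith
      rw [abs_mul, abs_pow] at h3
      have h4 : 1 * t ≤ |μ| ^ k * t :=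
        mul_le_mul_of_nonneg_right (one_le_pow₀ hcon) (abs_nonneg _)
      linarith
    have hl : Tendsto (fun k : ℕ => r ^ k * a) atTop (𝓝 0) := by
      simpa using (tendsto_pow_atTop_nhds_zero_of_lt_one hr0 hr1).mul_const a
    have h5 : 2 * t ≤ 0 := ge_of_tendsto' hl hk
    exact abs_eq_zero.1 (le_antisymm (by linarith) (abs_nonneg _))
  ext i j
  simpa using hzero (Pi.single i 1) (Pi.single j 1)

/-- Trace-adjoint operators have the same invertibility behaviour. -/
lemma isUnit_of_adjoint {n : ℕ} {F F' : Module.End ℝ (Matrix (Fin n) (Fin n) ℝ)}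
    (had : ∀ X Y, (Xᵀ * F Y).trace = ((F' X)ᵀ * Y).trace) (hu : IsUnit F) : IsUnit F' := by
  rw [LinearMap.isUnit_iff_ker_eq_bot, LinearMap.ker_eq_bot']
  intro X hX
  obtain ⟨Y, hY⟩ := ((Module.End.isUnit_iff _).1 hu).2 X
  have := had X Y
  rw [hX, hY] at this
  simp only [transpose_zero, Matrix.zero_mul, trace_zero] at this
  have h2 : (Xᴴ * X).trace = 0 := by simpa using this
  exact trace_conjTranspose_mul_self_eq_zero_iff.1 h2

lemma sandwich_adjoint {n : ℕ} (M X Y : Matrix (Fin n) (Fin n) ℝ) :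
    (Xᵀ * sandwich M Y).trace = ((sandwich Mᵀ X)ᵀ * Y).trace := by
  simp only [sandwich_apply, transpose_mul, transpose_transpose]
  rw [show Xᵀ * (M * Y * Mᵀ) = (Xᵀ * M * Y) * Mᵀ by simp only [Matrix.mul_assoc],
    trace_mul_comm]
  simp only [Matrix.mul_assoc]

/-! ### The closed-loop operators -/

section closedLoop

variable {n m p q : ℕ}
    (A : Matrix (Fin n) (Fin n) ℝ) (A' : Fin p → Matrix (Fin n) (Fin n) ℝ)
    (B : Matrix (Fin n) (Fin m) ℝ) (B' : Fin q → Matrix (Fin n) (Fin m) ℝ)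
    (al : Fin p → ℝ) (be : Fin q → ℝ)

lemma calTstar_apply (L : Matrix (Fin m) (Fin n) ℝ) (P : Matrix (Fin n) (Fin n) ℝ) :
    calTstar A A' B B' al be L P = (A + B * L)ᵀ * P * (A + B * L)
      + ∑ i, al i • ((A' i)ᵀ * P * A' i) + ∑ j, be j • ((B' j * L)ᵀ * P * (B' j * L)) := by
  simp [calTstar, sandwich_apply]

lemma isCP_calTstar (hal : ∀ i, 0 ≤ al i) (hbe : ∀ j, 0 ≤ be j)
    (L : Matrix (Fin m) (Fin n) ℝ) : IsCP (calTstar A A' B B' al be L) :=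
  ((isCP_sandwich _).add (isCP_sum _ _ fun i => (isCP_sandwich _).smul (hal i))).add
    (isCP_sum _ _ fun j => (isCP_sandwich _).smul (hbe j))

lemma calT_adjoint (L : Matrix (Fin m) (Fin n) ℝ) (X Y : Matrix (Fin n) (Fin n) ℝ) :
    (Xᵀ * calT A A' B B' al be L Y).trace
      = ((calTstar A A' B B' al be L X)ᵀ * Y).trace := by
  simp only [calT, calTstar, LinearMap.add_apply, LinearMap.sum_apply, LinearMap.smul_apply,
    Matrix.mul_add, Matrix.add_mul, Matrix.mul_sum, Matrix.sum_mul, transpose_add, transpose_sum,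
    transpose_smul, Matrix.mul_smul, Matrix.smul_mul, trace_add, trace_sum, trace_smul,
    sandwich_adjoint]

lemma trace_swap (X Y : Matrix (Fin n) (Fin n) ℝ) : (Xᵀ * Y).trace = (Yᵀ * X).trace := by
  rw [← trace_transpose, transpose_mul, transpose_transpose]

lemma adm_units {L : Matrix (Fin m) (Fin n) ℝ} (h : Admissible A A' B B' al be L) :
    ∀ s ∈ Set.Icc (0 : ℝ) 1, IsUnit (1 - s • calTstar A A' B B' al be L) := by
  rintro s ⟨hs0, hs1⟩
  have hu : IsUnit (1 - s • calT A A' B B' al be L) := by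
    rcases hs0.eq_or_lt with rfl | hs
    · simp
    have hmem : s⁻¹ ∉ spectrum ℝ (calT A A' B B' al be L) := by
      intro hmem
      have h1 : (‖s⁻¹‖₊ : ENNReal) ≤ spectralRadius ℝ (calT A A' B B' al be L) :=
        le_iSup₂ (f := fun k (_ : k ∈ spectrum ℝ (calT A A' B B' al be L)) =>
          (‖k‖₊ : ENNReal)) s⁻¹ hmem
      have h2 := lt_of_le_of_lt h1 h
      have h3 : ‖s⁻¹‖₊ < 1 := by exact_mod_cast h2
      have h4 : ‖s⁻¹‖ < 1 := by exact_mod_cast h3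
      rw [Real.norm_eq_abs, abs_of_pos (inv_pos.2 hs)] at h4
      exact absurd h4 (not_lt.2 ((one_le_inv₀ hs).2 hs1))
    rw [spectrum.notMem_iff] at hmem
    have h5 := hmem.smul (Units.mk0 s hs.ne')
    have h6 : Units.mk0 s hs.ne' • ((algebraMap ℝ (Module.End ℝ (Matrix (Fin n) (Fin n) ℝ))) s⁻¹
        - calT A A' B B' al be L) = 1 - s • calT A A' B B' al be L := by
      rw [Units.smul_def, Units.val_mk0, smul_sub, Algebra.algebraMap_eq_smul_one, smul_smul,
        mul_inv_cancel₀ hs.ne', one_smul]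
    rwa [h6] at h5
  refine isUnit_of_adjoint (fun X Y => ?_) hu
  simp only [LinearMap.sub_apply, Module.End.one_apply, LinearMap.smul_apply, Matrix.mul_sub,
    Matrix.sub_mul, transpose_sub, transpose_smul, Matrix.mul_smul, Matrix.smul_mul, trace_sub,
    trace_smul, calT_adjoint]

lemma adm_of_cert (hal : ∀ i, 0 ≤ al i) (hbe : ∀ j, 0 ≤ be j)
    {L : Matrix (Fin m) (Fin n) ℝ} {Z : Matrix (Fin n) (Fin n) ℝ} (hZ : Z.PosDef)
    (hZF : (Z - calTstar A A' B B' al be L Z).PosDef) : Admissible A A' B B' al be L := by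
  have hlt : ∀ μ ∈ spectrum ℝ (calT A A' B B' al be L), |μ| < 1 := by
    intro μ hμ
    refine spectrum_of_cert (isCP_calTstar A A' B B' al be hal hbe L) hZ hZF ?_
    rw [spectrum.mem_iff] at hμ ⊢
    refine fun hu => hμ (isUnit_of_adjoint (fun X Y => ?_) hu)
    simp only [LinearMap.sub_apply, Module.algebraMap_end_apply, Matrix.mul_sub,
      Matrix.sub_mul, transpose_sub, transpose_smul, Matrix.mul_smul, Matrix.smul_mul, trace_sub,
      trace_smul]
    rw [trace_swap X (calTstar A A' B B' al be L Y), ← calT_adjoint,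
      trace_swap Y (calT A A' B B' al be L X)]
  have hfin : (spectrum ℝ (calT A A' B B' al be L)).Finite :=
    Module.End.finite_spectrum _
  unfold Admissible spectralRadius
  by_cases hne : (spectrum ℝ (calT A A' B B' al be L)).Nonempty
  · obtain ⟨μ, hμ, hmax⟩ := Set.exists_max_image _ (fun x => ‖x‖₊) hfin hne
    refine lt_of_le_of_lt (b := (‖μ‖₊ : ENNReal)) (iSup₂_le fun k hk => ?_) ?_
    · exact_mod_cast hmax k hk
    · have h1 : ‖μ‖ < 1 := hlt μ hμ
      have h2 : ‖μ‖₊ < 1 := by exact_mod_cast h1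
      exact_mod_cast h2
  · rw [Set.not_nonempty_iff_eq_empty] at hne
    simp [hne]

/-- The matrix `R + Bᵀ P B + Σⱼ β̄ⱼ Bⱼᵀ P Bⱼ`. -/
noncomputable def gMat (R : Matrix (Fin m) (Fin m) ℝ) (P : Matrix (Fin n) (Fin n) ℝ) :
    Matrix (Fin m) (Fin m) ℝ :=
  R + Bᵀ * P * B + ∑ j, be j • ((B' j)ᵀ * P * B' j)

lemma psd_conj {k l : ℕ} {P : Matrix (Fin k) (Fin k) ℝ} (hP : P.PosSemidef)
    (M : Matrix (Fin k) (Fin l) ℝ) : (Mᵀ * P * M).PosSemidef := by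
  simpa using hP.conjTranspose_mul_mul_same M

lemma psd_sum {k : ℕ} {ι : Type*} (s : Finset ι) (w : ι → ℝ)
    (M : ι → Matrix (Fin k) (Fin k) ℝ) (hw : ∀ i, 0 ≤ w i) (hM : ∀ i, (M i).PosSemidef) :
    (∑ i ∈ s, w i • M i).PosSemidef :=
  Matrix.posSemidef_sum s fun i _ => (hM i).smul (hw i)

lemma gMat_sym_psd (hbe : ∀ j, 0 ≤ be j) {P : Matrix (Fin n) (Fin n) ℝ} (hP : P.PosSemidef) :
    (Bᵀ * P * B + ∑ j, be j • ((B' j)ᵀ * P * B' j)).PosSemidef :=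
  (psd_conj hP B).add (psd_sum _ _ _ hbe fun j => psd_conj hP (B' j))

lemma gMat_pd (hbe : ∀ j, 0 ≤ be j) {R : Matrix (Fin m) (Fin m) ℝ} (hR : R.PosDef)
    {P : Matrix (Fin n) (Fin n) ℝ} (hP : P.PosSemidef) : (gMat B B' be R P).PosDef := by
  rw [gMat, add_assoc]
  exact hR.add_posSemidef (gMat_sym_psd B B' be hbe hP)

/-- Completion of squares. -/
lemma complete_square (Q : Matrix (Fin n) (Fin n) ℝ) (R : Matrix (Fin m) (Fin m) ℝ)
    {P : Matrix (Fin n) (Fin n) ℝ} (hP : Pᵀ = P) (hG : (gMat B B' be R P).PosDef)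
    (L L' : Matrix (Fin m) (Fin n) ℝ) (hL' : L' = -(gMat B B' be R P)⁻¹ * (Bᵀ * P * A)) :
    calTstar A A' B B' al be L P + Q + Lᵀ * R * L
      = Q + Aᵀ * P * A + (∑ i, al i • ((A' i)ᵀ * P * A' i))
        - Aᵀ * P * B * (gMat B B' be R P)⁻¹ * (Bᵀ * P * A)
        + (L - L')ᵀ * gMat B B' be R P * (L - L') := by
  have hGs := (pd_iff.1 hG).1
  have hdet : IsUnit (gMat B B' be R P).det := (Matrix.isUnit_iff_isUnit_det _).1 hG.isUnit
  have hN : (Bᵀ * P * A)ᵀ = Aᵀ * P * B := by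
    simp [hP, Matrix.mul_assoc]
  have h1 : gMat B B' be R P * L' = -(Bᵀ * P * A) := by
    rw [hL', Matrix.neg_mul, Matrix.mul_neg, Matrix.mul_nonsing_inv_cancel_left _ _ hdet]
  have h2 : L'ᵀ * gMat B B' be R P = -(Aᵀ * P * B) := by
    have := congrArg transpose h1
    rwa [transpose_mul, hGs, transpose_neg, hN] at this
  have h3 : (L - L')ᵀ * gMat B B' be R P * (L - L')
      = Lᵀ * gMat B B' be R P * L + Lᵀ * (Bᵀ * P * A) + Aᵀ * P * B * L
        + Aᵀ * P * B * (gMat B B' be R P)⁻¹ * (Bᵀ * P * A) := by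
    have e1 : Lᵀ * gMat B B' be R P * L' = -(Lᵀ * (Bᵀ * P * A)) := by
      rw [Matrix.mul_assoc, h1, Matrix.mul_neg]
    have e2 : (Aᵀ * P * B) * L' = -(Aᵀ * P * B * (gMat B B' be R P)⁻¹ * (Bᵀ * P * A)) := by
      rw [hL', Matrix.neg_mul, Matrix.mul_neg, Matrix.mul_assoc (Aᵀ * P * B)]
    rw [transpose_sub, Matrix.sub_mul, h2, Matrix.sub_mul, Matrix.mul_sub, Matrix.mul_sub, e1,
      Matrix.neg_mul, Matrix.neg_mul, e2]
    abel
  have h4 : Lᵀ * gMat B B' be R P * L = Lᵀ * R * L + Lᵀ * Bᵀ * P * B * L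
      + ∑ j, be j • ((B' j * L)ᵀ * P * (B' j * L)) := by
    simp only [gMat, Matrix.mul_add, Matrix.add_mul, Matrix.mul_sum, Matrix.sum_mul,
      Matrix.mul_smul, Matrix.smul_mul, transpose_mul, Matrix.mul_assoc]
  have h5 : (A + B * L)ᵀ * P * (A + B * L) = Aᵀ * P * A + Lᵀ * (Bᵀ * P * A) + Aᵀ * P * B * L
      + Lᵀ * Bᵀ * P * B * L := by
    simp only [Matrix.mul_add, Matrix.add_mul, transpose_add, transpose_mul, Matrix.mul_assoc]
    abel
  rw [h3, h4, calTstar_apply, h5]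
  abel

lemma young {k l : ℕ} {Y : Matrix (Fin k) (Fin k) ℝ} (M N : Matrix (Fin k) (Fin l) ℝ)
    {δ : ℝ} (hδ : 0 < δ) :
    (1 + δ) • (Mᵀ * Y * M) + (1 + δ⁻¹) • (Nᵀ * Y * N) - (M + N)ᵀ * Y * (M + N)
      = δ⁻¹ • ((δ • M - N)ᵀ * Y * (δ • M - N)) := by
  simp only [Matrix.mul_add, Matrix.add_mul, Matrix.mul_sub, Matrix.sub_mul, transpose_add,
    transpose_sub, transpose_smul, Matrix.mul_smul, Matrix.smul_mul, smul_sub, smul_smul]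
  rw [inv_mul_cancel₀ hδ.ne', ← mul_assoc, inv_mul_cancel₀ hδ.ne']
  module

lemma perturb (hal : ∀ i, 0 ≤ al i) (hbe : ∀ j, 0 ≤ be j)
    {Y : Matrix (Fin n) (Fin n) ℝ} (hY : Y.PosSemidef) (L D : Matrix (Fin m) (Fin n) ℝ)
    {δ : ℝ} (hδ : 0 < δ) :
    ((1 + δ) • calTstar A A' B B' al be L Y
      + (1 + δ⁻¹) • (Dᵀ * (Bᵀ * Y * B + ∑ j, be j • ((B' j)ᵀ * Y * B' j)) * D)
      - calTstar A A' B B' al be (L + D) Y).PosSemidef := by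
  have e1 := young (Y := Y) (A + B * L) (B * D) hδ
  have e2 := fun j => young (Y := Y) (B' j * L) (B' j * D) hδ
  have hδ' : 0 ≤ δ⁻¹ := (inv_pos.2 hδ).le
  have hpsd : (δ⁻¹ • ((δ • (A + B * L) - B * D)ᵀ * Y * (δ • (A + B * L) - B * D))
      + δ • (∑ i, al i • ((A' i)ᵀ * Y * A' i))
      + ∑ j, be j • (δ⁻¹ • ((δ • (B' j * L) - B' j * D)ᵀ * Y * (δ • (B' j * L) - B' j * D)))
      ).PosSemidef :=
    (((psd_conj hY _).smul hδ').add ((psd_sum _ _ _ hal fun i => psd_conj hY _).smul hδ.le)).add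
      (psd_sum _ _ _ hbe fun j => (psd_conj hY _).smul hδ')
  convert hpsd using 1
  rw [← e1]
  simp only [← e2]
  have e3 : Dᵀ * (Bᵀ * Y * B + ∑ j, be j • ((B' j)ᵀ * Y * B' j)) * D
      = (B * D)ᵀ * Y * (B * D) + ∑ j, be j • ((B' j * D)ᵀ * Y * (B' j * D)) := by
    simp only [Matrix.mul_add, Matrix.add_mul, Matrix.mul_sum, Matrix.sum_mul,
      Matrix.mul_smul, Matrix.smul_mul, transpose_mul, Matrix.mul_assoc]
  rw [e3, calTstar_apply, calTstar_apply]
  simp only [Matrix.mul_add B, Matrix.mul_add (B' _), ← add_assoc, smul_sub, smul_add,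
    Finset.sum_sub_distrib, Finset.sum_add_distrib]
  simp only [smul_comm (be _) (1 + δ), smul_comm (be _) (1 + δ⁻¹), ← Finset.smul_sum]
  module

/-- Policy improvement preserves admissibility. -/
lemma adm_improve (hal : ∀ i, 0 ≤ al i) (hbe : ∀ j, 0 ≤ be j)
    {G : Matrix (Fin m) (Fin m) ℝ} (hG : G.PosDef) {P W : Matrix (Fin n) (Fin n) ℝ}
    (hP : P.PosSemidef) (hW : W.PosSemidef) {L L' : Matrix (Fin m) (Fin n) ℝ}
    (hadm : Admissible A A' B B' al be L)
    (hPeq : P = calTstar A A' B B' al be L' P + W + (L - L')ᵀ * G * (L - L')) :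
    Admissible A A' B B' al be L' := by
  obtain ⟨Y, hY, hYeq⟩ := lyap_pd (isCP_calTstar A A' B B' al be hal hbe L)
    (adm_units A A' B B' al be hadm) (W := 1) Matrix.PosDef.one
  have hYpd : Y.PosDef := by
    rw [hYeq, add_comm]
    exact Matrix.PosDef.one.add_posSemidef ((isCP_calTstar A A' B B' al be hal hbe L).psd hY)
  have hTY : calTstar A A' B B' al be L Y = Y - 1 := eq_sub_of_add_eq hYeq.symm
  set K := Bᵀ * Y * B + ∑ j, be j • ((B' j)ᵀ * Y * B' j) with hK
  have hKpsd : K.PosSemidef := gMat_sym_psd B B' be hbe hY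
  -- choose `c` with `Y ≤ c`, `δ = 1 / (2 c)`
  obtain ⟨c₀, hc₀⟩ := pd_dominates (Matrix.PosDef.one (n := Fin n) (R := ℝ)) (psd_iff.1 hY).1
  set c := max c₀ 1 with hc
  have hc1 : 1 ≤ c := le_max_right _ _
  have hcY := hc₀ c (le_max_left _ _)
  have hcpos : 0 < c := by linarith
  set δ := (2 * c)⁻¹ with hδdef
  have hδ : 0 < δ := by positivity
  obtain ⟨C₀, hC₀⟩ := pd_dominates (K := (1 + δ⁻¹) • K) hG
    (by rw [transpose_smul, (psd_iff.1 hKpsd).1])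
  set C := max C₀ 0 with hC
  have hC0 : 0 ≤ C := le_max_right _ _
  have hCG := hC₀ C (le_max_left _ _)
  set D := L' - L with hD
  have hLD : L' = L + D := by rw [hD]; abel
  have hpert := perturb A A' B B' al be hal hbe hY L D hδ
  rw [← hK, ← hLD, hTY] at hpert
  refine adm_of_cert A A' B B' al be hal hbe (Z := Y + C • P)
    (hYpd.add_posSemidef (hP.smul hC0)) ?_
  have hDG : (L - L')ᵀ * G * (L - L') = Dᵀ * G * D := by
    have : L - L' = -D := by rw [hD]; abel
    rw [this, transpose_neg, Matrix.neg_mul, Matrix.neg_mul, Matrix.mul_neg, neg_neg]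
  rw [hDG] at hPeq
  have hTP : calTstar A A' B B' al be L' P = P - W - Dᵀ * G * D := by
    nth_rewrite 2 [hPeq]
    abel
  have hsum : ((1 / 2 : ℝ) • (1 : Matrix (Fin n) (Fin n) ℝ)
      + (δ • (c • 1 - Y) + ((1 + δ) • (Y - 1) + (1 + δ⁻¹) • (Dᵀ * K * D)
        - calTstar A A' B B' al be L' Y)
      + C • W + Dᵀ * (C • G - (1 + δ⁻¹) • K) * D + δ • 1)).PosDef := by
    refine (Matrix.PosDef.one.smul (by norm_num)).add_posSemidef ?_
    exact ((((hcY.smul hδ.le).add hpert).add (hW.smul hC0)).add (psd_conj hCG D)).add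
      (Matrix.PosSemidef.one.smul hδ.le)
  convert hsum using 1
  rw [map_add, map_smul, hTP]
  have hδc : δ * c = 1 / 2 := by rw [hδdef]; field_simp
  simp only [Matrix.mul_sub, Matrix.sub_mul, Matrix.mul_smul, Matrix.smul_mul, smul_sub, smul_smul]
  rw [hδc]
  module

end closedLoop

/-- A Loewner-decreasing sequence of positive semidefinite matrices converges. -/
lemma psd_antitone_tendsto {n : ℕ} {P : ℕ → Matrix (Fin n) (Fin n) ℝ}
    (hpsd : ∀ k, (P k).PosSemidef) (hdec : ∀ k, (P k - P (k + 1)).PosSemidef) :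
    ∃ X : Matrix (Fin n) (Fin n) ℝ, X.PosSemidef ∧ Tendsto P atTop (𝓝 X) := by
  have hq : ∀ v : Fin n → ℝ, ∃ l : ℝ, Tendsto (fun k => v ⬝ᵥ P k *ᵥ v) atTop (𝓝 l) := by
    intro v
    refine ⟨_, tendsto_atTop_ciInf (antitone_nat_of_succ_le fun k => ?_) ⟨0, ?_⟩⟩
    · have := (psd_iff.1 (hdec k)).2 v
      rw [sub_mulVec, dotProduct_sub] at this
      linarith
    · rintro _ ⟨k, rfl⟩
      exact (psd_iff.1 (hpsd k)).2 v
  have hentry : ∀ i j, ∃ l : ℝ, Tendsto (fun k => P k i j) atTop (𝓝 l) := by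
    intro i j
    obtain ⟨a, ha⟩ := hq (Pi.single i 1 + Pi.single j 1)
    obtain ⟨b, hb⟩ := hq (Pi.single i 1)
    obtain ⟨c, hc⟩ := hq (Pi.single j 1)
    refine ⟨_, (((ha.sub hb).sub hc).div_const 2).congr fun k => ?_⟩
    have hs : P k j i = P k i j := congrFun (congrFun (psd_iff.1 (hpsd k)).1 i) j
    simp [mulVec_add, add_dotProduct, dotProduct_add]
    linarith
  choose X hX using hentry
  have hlim : Tendsto P atTop (𝓝 (Matrix.of X)) :=
    tendsto_pi_nhds.2 fun i => tendsto_pi_nhds.2 fun j => hX i j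
  exact ⟨Matrix.of X, psd_closed.mem_of_tendsto hlim (Eventually.of_forall hpsd), hlim⟩

theorem stmt12 {n m p q : ℕ} (hn : 0 < n) (hm : 0 < m)
    (A : Matrix (Fin n) (Fin n) ℝ) (A' : Fin p → Matrix (Fin n) (Fin n) ℝ)
    (B : Matrix (Fin n) (Fin m) ℝ) (B' : Fin q → Matrix (Fin n) (Fin m) ℝ)
    (al : Fin p → ℝ) (be : Fin q → ℝ) (hal : ∀ i, 0 ≤ al i) (hbe : ∀ j, 0 ≤ be j)
    (Q : Matrix (Fin n) (Fin n) ℝ) (hQ : Q.PosSemidef)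
    (R : Matrix (Fin m) (Fin m) ℝ) (hR : R.PosDef)
    (L : ℕ → Matrix (Fin m) (Fin n) ℝ) (hadm0 : Admissible A A' B B' al be (L 0))
    (P : ℕ → Matrix (Fin n) (Fin n) ℝ)
    (hP : ∀ τ, P τ = calTstar A A' B B' al be (L τ) (P τ) + Q + (L τ)ᵀ * R * (L τ))
    (hLrec : ∀ τ, L (τ + 1) =
      -(R + Bᵀ * P τ * B + ∑ j, be j • ((B' j)ᵀ * P τ * B' j))⁻¹ * (Bᵀ * P τ * A)) :
    (∀ τ, Admissible A A' B B' al be (L τ)) ∧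
    (∀ τ, (P τ - P (τ + 1)).PosSemidef) ∧
    (∀ τ, (P τ).PosSemidef) ∧
    ∃ Pstar : Matrix (Fin n) (Fin n) ℝ, Pstar.PosSemidef ∧
      (Pstar = Q + Aᵀ * Pstar * A + (∑ i, al i • ((A' i)ᵀ * Pstar * A' i)) -
        Aᵀ * Pstar * B *
          (R + Bᵀ * Pstar * B + ∑ j, be j • ((B' j)ᵀ * Pstar * B' j))⁻¹ *
          (Bᵀ * Pstar * A)) ∧
      Filter.Tendsto P Filter.atTop (nhds Pstar) ∧
      Filter.Tendsto L Filter.atTop (nhds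
        (-(R + Bᵀ * Pstar * B + ∑ j, be j • ((B' j)ᵀ * Pstar * B' j))⁻¹ *
          (Bᵀ * Pstar * A))) := by
  have hCP := isCP_calTstar A A' B B' al be hal hbe
  -- right-hand side of the Lyapunov equation is positive semidefinite
  have hrhs : ∀ M : Matrix (Fin m) (Fin n) ℝ, (Q + Mᵀ * R * M).PosSemidef := fun M =>
    hQ.add (psd_conj hR.posSemidef M)
  have hpsd_of : ∀ τ, Admissible A A' B B' al be (L τ) → (P τ).PosSemidef := fun τ h =>
    lyap_psd (hCP (L τ)) (adm_units A A' B B' al be h) (hrhs (L τ))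
      (by rw [← add_assoc]; exact hP τ)
  have hstep : ∀ τ, (P τ).PosSemidef → P τ = calTstar A A' B B' al be (L (τ + 1)) (P τ)
      + (Q + (L (τ + 1))ᵀ * R * L (τ + 1))
      + (L τ - L (τ + 1))ᵀ * gMat B B' be R (P τ) * (L τ - L (τ + 1)) := by
    intro τ hτ
    have hs := (psd_iff.1 hτ).1
    have hG := gMat_pd B B' be hbe hR hτ
    have h1 := complete_square A A' B B' al be Q R hs hG (L τ) (L (τ + 1)) (hLrec τ)
    have h2 := complete_square A A' B B' al be Q R hs hG (L (τ + 1)) (L (τ + 1)) (hLrec τ)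
    rw [sub_self, Matrix.mul_zero, add_zero] at h2
    rw [← hP τ, ← h2] at h1
    rw [← add_assoc]
    exact h1
  have hadm : ∀ τ, Admissible A A' B B' al be (L τ) := by
    intro τ
    induction τ with
    | zero => exact hadm0
    | succ τ ih =>
      have hτ := hpsd_of τ ih
      exact adm_improve A A' B B' al be hal hbe (gMat_pd B B' be hbe hR hτ) hτ
        (hrhs (L (τ + 1))) ih (hstep τ hτ)
  have hpsd : ∀ τ, (P τ).PosSemidef := fun τ => hpsd_of τ (hadm τ)
  have hdec : ∀ τ, (P τ - P (τ + 1)).PosSemidef := by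
    intro τ
    refine lyap_psd (hCP (L (τ + 1))) (adm_units A A' B B' al be (hadm (τ + 1)))
      (psd_conj (gMat_pd B B' be hbe hR (hpsd τ)).posSemidef (L τ - L (τ + 1))) ?_
    have h1 := hstep τ (hpsd τ)
    have h2 := hP (τ + 1)
    rw [map_sub]
    nth_rewrite 1 [h1]
    nth_rewrite 1 [h2]
    abel
  obtain ⟨X, hX, hlim⟩ := psd_antitone_tendsto hpsd hdec
  have hGX := gMat_pd B B' be hbe hR hX
  have hGc : Continuous (gMat B B' be R) := by
    unfold gMat
    fun_prop
  have hLlim1 : Tendsto (fun τ => L (τ + 1)) atTop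
      (𝓝 (-(gMat B B' be R X)⁻¹ * (Bᵀ * X * A))) := by
    have hdet : (gMat B B' be R X).det ≠ 0 :=
      ((Matrix.isUnit_iff_isUnit_det _).1 hGX.isUnit).ne_zero
    have hinv : Tendsto (fun τ => (gMat B B' be R (P τ))⁻¹) atTop
        (𝓝 (gMat B B' be R X)⁻¹) := by
      refine (continuousAt_matrix_inv _ ?_).tendsto.comp ((hGc.tendsto X).comp hlim)
      rw [Ring.inverse_eq_inv']
      exact continuousAt_inv₀ hdet
    have hN : Tendsto (fun τ => Bᵀ * P τ * A) atTop (𝓝 (Bᵀ * X * A)) := by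
      have : Continuous fun Z : Matrix (Fin n) (Fin n) ℝ => Bᵀ * Z * A := by fun_prop
      exact (this.tendsto X).comp hlim
    have hmul : Continuous fun z : Matrix (Fin m) (Fin m) ℝ × Matrix (Fin m) (Fin n) ℝ =>
        -z.1 * z.2 := by fun_prop
    have h3 := (hmul.tendsto _).comp (hinv.prodMk_nhds hN)
    exact h3.congr fun τ => (hLrec τ).symm
  have hLlim := (tendsto_add_atTop_iff_nat 1).1 hLlim1
  refine ⟨hadm, hdec, hpsd, X, hX, ?_, hlim, hLlim⟩
  have hsq := complete_square A A' B B' al be Q R (psd_iff.1 hX).1 hGX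
    (-(gMat B B' be R X)⁻¹ * (Bᵀ * X * A)) _ rfl
  rw [sub_self, Matrix.mul_zero, add_zero] at hsq
  change X = Q + Aᵀ * X * A + (∑ i, al i • ((A' i)ᵀ * X * A' i))
        - Aᵀ * X * B * (gMat B B' be R X)⁻¹ * (Bᵀ * X * A)
  rw [← hsq]
  have hcont : Continuous fun z : Matrix (Fin m) (Fin n) ℝ × Matrix (Fin n) (Fin n) ℝ =>
      calTstar A A' B B' al be z.1 z.2 + Q + z.1ᵀ * R * z.1 := by
    simp only [calTstar_apply]
    fun_prop
  have h4 := (hcont.tendsto _).comp (hLlim.prodMk_nhds hlim)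
  exact tendsto_nhds_unique hlim (h4.congr fun τ => (hP τ).symm)
end

section
/- Let the gain L ∈ ℝ^{m×n} be given, let P be a symmetric solution of the stochastic Lyapunov equation for L, and let H be the (n+m)×(n+m) matrix with blocks H_xx = Q + Aᵀ P A + Σ_{i=1}^p ᾱ_i A_iᵀ P A_i, H_xu = Aᵀ P B = H_uxᵀ, H_uu = R + Bᵀ P B + Σ_{j=1}^q β̄_j B_jᵀ P B_j. Let Σ_{k+1} = 𝒯_L(Σ_k) + D be the closed-loop covariance recursion from any symmetric positive semidefinite Σ_0, and write M = [I; L] for the (n+m)×n matrix stacking the identity above L. Then for every k, the Q-function Bellman identity holds: tr(H · M Σ_k Mᵀ) = tr((Q + Lᵀ R L) Σ_k) − tr(H · M D Mᵀ) + tr(H · M Σ_{k+1} Mᵀ). -/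
open Matrix Filter Topology

theorem stmt15 {n m p q : ℕ} (hn : 0 < n) (hm : 0 < m)
    (A : Matrix (Fin n) (Fin n) ℝ) (A' : Fin p → Matrix (Fin n) (Fin n) ℝ)
    (B : Matrix (Fin n) (Fin m) ℝ) (B' : Fin q → Matrix (Fin n) (Fin m) ℝ)
    (al : Fin p → ℝ) (be : Fin q → ℝ) (hal : ∀ i, 0 ≤ al i) (hbe : ∀ j, 0 ≤ be j)
    (Q : Matrix (Fin n) (Fin n) ℝ) (hQ : Q.PosSemidef)
    (R : Matrix (Fin m) (Fin m) ℝ) (hR : R.PosDef)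
    (D : Matrix (Fin n) (Fin n) ℝ) (hD : D.PosDef)
    (L : Matrix (Fin m) (Fin n) ℝ)
    (P : Matrix (Fin n) (Fin n) ℝ) (hPsym : Pᵀ = P)
    (hP : P = calTstar A A' B B' al be L P + Q + Lᵀ * R * L)
    (H : Matrix (Fin n ⊕ Fin m) (Fin n ⊕ Fin m) ℝ)
    (hH : H = Matrix.fromBlocks
      (Q + Aᵀ * P * A + ∑ i, al i • ((A' i)ᵀ * P * A' i))
      (Aᵀ * P * B)
      ((Aᵀ * P * B)ᵀ)
      (R + Bᵀ * P * B + ∑ j, be j • ((B' j)ᵀ * P * B' j)))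
    (S : ℕ → Matrix (Fin n) (Fin n) ℝ) (hS0 : (S 0).PosSemidef)
    (hrec : ∀ k, S (k + 1) = calT A A' B B' al be L (S k) + D)
    (M : Matrix (Fin n ⊕ Fin m) (Fin n) ℝ)
    (hM : M = Matrix.fromRows (1 : Matrix (Fin n) (Fin n) ℝ) L) :
    ∀ k, (H * (M * S k * Mᵀ)).trace
        = ((Q + Lᵀ * R * L) * S k).trace - (H * (M * D * Mᵀ)).trace +
          (H * (M * S (k + 1) * Mᵀ)).trace := by
  have hMHM : Mᵀ * H * M = P := by
    conv_rhs => rw [hP]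
    subst hM hH
    simp only [transpose_fromRows, Matrix.transpose_one, Matrix.fromCols_mul_fromBlocks,
      Matrix.fromCols_mul_fromRows, calTstar, sandwich, LinearMap.add_apply, LinearMap.sum_apply,
      LinearMap.smul_apply, LinearMap.comp_apply, LinearMap.mulLeft_apply,
      LinearMap.mulRight_apply, Matrix.transpose_transpose, Matrix.transpose_mul,
      Matrix.transpose_add, hPsym, Matrix.one_mul, Matrix.mul_one, Matrix.mul_add,
      Matrix.add_mul, Matrix.mul_sum, Matrix.sum_mul, Matrix.mul_smul, Matrix.smul_mul,
      Matrix.mul_assoc]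
    abel
  have key : ∀ X : Matrix (Fin n) (Fin n) ℝ, (H * (M * X * Mᵀ)).trace = (P * X).trace := by
    intro X
    rw [← hMHM, ← Matrix.mul_assoc, Matrix.trace_mul_comm]
    simp only [Matrix.mul_assoc]
  have sw : ∀ N X : Matrix (Fin n) (Fin n) ℝ,
      (P * (N * (X * Nᵀ))).trace = (Nᵀ * (P * N) * X).trace := by
    intro N X
    rw [Matrix.mul_assoc, Matrix.trace_mul_comm (Nᵀ)]
    simp only [Matrix.mul_assoc]
  have adj : ∀ X : Matrix (Fin n) (Fin n) ℝ, (P * calT A A' B B' al be L X).trace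
      = (calTstar A A' B B' al be L P * X).trace := by
    intro X
    simp only [calT, calTstar, sandwich, LinearMap.add_apply, LinearMap.sum_apply,
      LinearMap.smul_apply, LinearMap.comp_apply, LinearMap.mulLeft_apply,
      LinearMap.mulRight_apply, Matrix.transpose_transpose, Matrix.mul_add (P),
      Matrix.add_mul _ _ X, Matrix.mul_sum, Matrix.sum_mul, Matrix.mul_smul, Matrix.smul_mul,
      Matrix.trace_add, Matrix.trace_sum, Matrix.trace_smul, sw]
  intro k
  rw [key, key, key, hrec, Matrix.mul_add, Matrix.trace_add, adj]
  have h : (P * S k).trace = ((calTstar A A' B B' al be L P + Q + Lᵀ * R * L) * S k).trace := by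
    rw [← hP]
  rw [h, add_assoc (calTstar A A' B B' al be L P), Matrix.add_mul _ _ (S k), Matrix.trace_add]
  ring
end
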